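/- Let g, g' : ℝ² → [0,∞) be continuous, compactly supported, and not identically zero, and fix θ ∈ ℝ. Then the ratio N_{g,g'}(θ − τ̄) / N_{g,g'}(θ) tends to 1 as τ̄ → 0⁺. -/

import Mathlib

open MeasureTheory Set ENNReal

noncomputable section

abbrev Plane := EuclideanSpace ℝ (Fin 2)

/-- The 2d heat kernel `p(t,x) = (2πt)⁻¹ exp(−|x|²/(2t))`. -/
def heatK (t : ℝ) (x : Plane) : ℝ :=
  (2 * Real.pi * t)⁻¹ * Real.exp (-‖x‖ ^ 2 / (2 * t))

/-- `j^{θ̄}(t) = e^{θ̄ t} ∫₀^∞ u^{t−1}/Γ(u) du`. -/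
def jfn (θ : ℝ) (t : ℝ) : ℝ :=
  Real.exp (θ * t) * ∫ u in Ioi (0 : ℝ), u ^ (t - 1) / Real.Gamma u

/-- The kernel `W^{θ̄}(t,(x₁,x₂),(x₁',x₂'))`, defined as a fourfold iterated integral with
values in `[0,∞]`. Here `u'' = t − u − u'`. -/
def Wker (θ t : ℝ) (x₁ x₂ x₁' x₂' : Plane) : ℝ≥0∞ :=
  ∫⁻ u in Ioo (0 : ℝ) t, ∫⁻ u' in Ioo (0 : ℝ) (t - u), ∫⁻ y : Plane, ∫⁻ y' : Plane,
    ENNReal.ofReal (heatK u (x₁ - y) * heatK u (x₂ - y) *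
      (4 * Real.pi * jfn θ u' * heatK (u' / 2) (y - y')) *
      (heatK (t - u - u') (y' - x₁') * heatK (t - u - u') (y' - x₂')))

/-- The pairing `N_{g,g'}(θ̄) = ∫ g(x₁)g(x₂) W^{θ̄}(1,(x₁,x₂),(x₁',x₂')) g'(x₁')g'(x₂') dx`. -/
def Npair (g g' : Plane → ℝ) (θ : ℝ) : ℝ≥0∞ :=
  ∫⁻ x₁ : Plane, ∫⁻ x₂ : Plane, ∫⁻ x₁' : Plane, ∫⁻ x₂' : Plane,
    ENNReal.ofReal (g x₁ * g x₂) * Wker θ 1 x₁ x₂ x₁' x₂' *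
      ENNReal.ofReal (g' x₁' * g' x₂')

/-!
Replacing `θ` by `θ + s` multiplies `j^θ(u')` by `exp (s u')`, and only times `u' ∈ (0, 1)` occur in
`N = N_{g,g'}`. Hence `N(θ + s) ≤ exp |s| N(θ)` for all `θ` and `s`, so the ratio lies between
`exp (-|τ|)` and `exp |τ|` as soon as `0 < N(θ) < ∞`.

For this last point, Tonelli's theorem writes `N(θ)` as the integral of
`(P_u g)²(y) · 4π j^θ(u') p(u'/2, y - y') · (P_{u''} g')²(y')`, where `P` is the heat semigroup. All
factors are positive, which gives `0 < N(θ)`. The integral is finite because `P` does not increase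
the sup norm and preserves mass, while `j^θ` is bounded on `(0, 1)`: the estimate
`Γ(u + 1) ≥ exp (u - e)` controls the integral defining it.
-/

/-! ### The function `jfn` -/

lemma integrableOn_exp_neg_mul_rpow_Ioi {s : ℝ} (hs : -1 < s) :
    IntegrableOn (fun x : ℝ => Real.exp (-x) * x ^ s) (Ioi 0) := by
  simpa only [add_sub_cancel_right] using
    Real.GammaIntegral_convergent (s := s + 1) (by linarith)

lemma rpow_mul_exp_neg_le_Gamma_add_one {a s : ℝ} (ha : 0 ≤ a) (hs : 0 ≤ s) :
    a ^ s * Real.exp (-a) ≤ Real.Gamma (s + 1) := by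
  have hΓ := integrableOn_exp_neg_mul_rpow_Ioi (neg_one_lt_zero.trans_le hs)
  have hsub : Ioi a ⊆ Ioi (0 : ℝ) := Ioi_subset_Ioi ha
  calc a ^ s * Real.exp (-a) = ∫ x in Ioi a, Real.exp (-x) * a ^ s := by
        rw [integral_mul_const, integral_exp_neg_Ioi, mul_comm]
    _ ≤ ∫ x in Ioi a, Real.exp (-x) * x ^ s :=
        setIntegral_mono_on ((integrableOn_exp_neg_Ioi a).mul_const _) (hΓ.mono_set hsub)
          measurableSet_Ioi fun x hx => by have : a < x := hx; gcongr
    _ ≤ ∫ x in Ioi (0 : ℝ), Real.exp (-x) * x ^ s :=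
        setIntegral_mono_set hΓ
          (ae_restrict_of_forall_mem measurableSet_Ioi fun x (hx : 0 < x) => by positivity)
          hsub.eventuallyLE
    _ = Real.Gamma (s + 1) := by
        rw [Real.Gamma_eq_integral (by positivity), add_sub_cancel_right]

lemma rpow_sub_one_div_Gamma_nonneg (t : ℝ) {u : ℝ} (hu : 0 < u) :
    0 ≤ u ^ (t - 1) / Real.Gamma u := by
  positivity

lemma rpow_sub_one_div_Gamma_le (t : ℝ) {u : ℝ} (hu : 0 < u) :
    u ^ (t - 1) / Real.Gamma u ≤ Real.exp (Real.exp 1) * (Real.exp (-u) * u ^ t) := by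
  -- The base `a = e` turns `a ^ u` into `exp u`, which is what makes `u ^ t / Γ(u + 1)` integrable.
  have hΓ : Real.exp u * Real.exp (-Real.exp 1) ≤ Real.Gamma (u + 1) := by
    simpa only [Real.exp_one_rpow] using
      rpow_mul_exp_neg_le_Gamma_add_one (Real.exp_pos 1).le hu.le
  calc u ^ (t - 1) / Real.Gamma u = u ^ t / Real.Gamma (u + 1) := by
        rw [Real.Gamma_add_one hu.ne', Real.rpow_sub_one hu.ne', div_div]
    _ ≤ u ^ t / (Real.exp u * Real.exp (-Real.exp 1)) := by gcongr
    _ = Real.exp (Real.exp 1) * (Real.exp (-u) * u ^ t) := by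
        rw [Real.exp_neg, Real.exp_neg]
        field_simp

lemma measurable_indicator_Ioi_inv_Gamma :
    Measurable ((Ioi (0 : ℝ)).indicator fun u => (Real.Gamma u)⁻¹) := by
  rw [← piecewise_eq_indicator]
  refine ContinuousOn.measurable_piecewise ?_ continuousOn_const measurableSet_Ioi
  exact Real.differentiableOn_Gamma_Ioi.continuousOn.inv₀ fun u hu => (Real.Gamma_pos_of_pos hu).ne'

lemma integrableOn_rpow_sub_one_div_Gamma {t : ℝ} (ht : -1 < t) :
    IntegrableOn (fun u : ℝ => u ^ (t - 1) / Real.Gamma u) (Ioi 0) := by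
  refine ((integrableOn_exp_neg_mul_rpow_Ioi ht).const_mul (Real.exp (Real.exp 1))).mono' ?_ ?_
  · refine ContinuousOn.aestronglyMeasurable ?_ measurableSet_Ioi
    refine (continuousOn_id.rpow_const fun u hu => Or.inl (ne_of_gt hu)).div
      Real.differentiableOn_Gamma_Ioi.continuousOn fun u hu => (Real.Gamma_pos_of_pos hu).ne'
  · refine ae_restrict_of_forall_mem measurableSet_Ioi fun u hu => ?_
    rw [Real.norm_of_nonneg (rpow_sub_one_div_Gamma_nonneg t hu)]
    exact rpow_sub_one_div_Gamma_le t hu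

lemma integral_rpow_sub_one_div_Gamma_le {t : ℝ} (ht : -1 < t) :
    ∫ u in Ioi (0 : ℝ), u ^ (t - 1) / Real.Gamma u ≤
      Real.exp (Real.exp 1) * Real.Gamma (t + 1) := by
  calc ∫ u in Ioi (0 : ℝ), u ^ (t - 1) / Real.Gamma u
      ≤ ∫ u in Ioi (0 : ℝ), Real.exp (Real.exp 1) * (Real.exp (-u) * u ^ t) :=
        setIntegral_mono_on (integrableOn_rpow_sub_one_div_Gamma ht)
          ((integrableOn_exp_neg_mul_rpow_Ioi ht).const_mul _) measurableSet_Ioi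
          fun u hu => rpow_sub_one_div_Gamma_le t hu
    _ = Real.exp (Real.exp 1) * Real.Gamma (t + 1) := by
        rw [integral_const_mul, Real.Gamma_eq_integral (by linarith), add_sub_cancel_right]

lemma integral_rpow_sub_one_div_Gamma_pos {t : ℝ} (ht : -1 < t) :
    0 < ∫ u in Ioi (0 : ℝ), u ^ (t - 1) / Real.Gamma u := by
  rw [setIntegral_pos_iff_support_of_nonneg_ae
    (ae_restrict_of_forall_mem measurableSet_Ioi fun u hu => rpow_sub_one_div_Gamma_nonneg t hu)
    (integrableOn_rpow_sub_one_div_Gamma ht), inter_eq_right.2]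
  · simp
  · intro u (hu : 0 < u)
    exact (show 0 < u ^ (t - 1) / Real.Gamma u by positivity).ne'

lemma jfn_nonneg (θ t : ℝ) : 0 ≤ jfn θ t :=
  mul_nonneg (Real.exp_pos _).le <|
    setIntegral_nonneg measurableSet_Ioi fun _ hu => rpow_sub_one_div_Gamma_nonneg t hu

lemma jfn_pos (θ : ℝ) {t : ℝ} (ht : -1 < t) : 0 < jfn θ t :=
  mul_pos (Real.exp_pos _) (integral_rpow_sub_one_div_Gamma_pos ht)

lemma exists_jfn_le (θ T : ℝ) : ∃ C, ∀ t ∈ Icc 0 T, jfn θ t ≤ C := by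
  have hcont : ContinuousOn
      (fun t => Real.exp (θ * t) * (Real.exp (Real.exp 1) * Real.Gamma (t + 1))) (Icc 0 T) := by
    refine ContinuousOn.mul (by fun_prop) (continuousOn_const.mul ?_)
    refine Real.differentiableOn_Gamma_Ioi.continuousOn.comp (by fun_prop) fun t ht => ?_
    exact add_pos_of_nonneg_of_pos ht.1 one_pos
  obtain ⟨C, hC⟩ := isCompact_Icc.bddAbove_image hcont
  refine ⟨C, fun t ht => le_trans ?_ (hC (mem_image_of_mem _ ht))⟩
  exact mul_le_mul_of_nonneg_left
    (integral_rpow_sub_one_div_Gamma_le (by linarith [ht.1])) (Real.exp_pos _).le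

lemma jfn_add (θ s t : ℝ) : jfn (θ + s) t = Real.exp (s * t) * jfn θ t := by
  rw [jfn, jfn, add_mul, Real.exp_add]
  ring

@[fun_prop]
lemma measurable_jfn (θ : ℝ) : Measurable (jfn θ) := by
  have hint (t : ℝ) : ∫ u in Ioi (0 : ℝ), u ^ (t - 1) / Real.Gamma u =
      ∫ u, u ^ (t - 1) * (Ioi (0 : ℝ)).indicator (fun u => (Real.Gamma u)⁻¹) u := by
    rw [← integral_indicator measurableSet_Ioi]
    simp only [div_eq_mul_inv, indicator_mul_right]
  have hΓ := measurable_indicator_Ioi_inv_Gamma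
  have hmeas : StronglyMeasurable fun p : ℝ × ℝ =>
      p.2 ^ (p.1 - 1) * (Ioi (0 : ℝ)).indicator (fun u => (Real.Gamma u)⁻¹) p.2 :=
    Measurable.stronglyMeasurable (by fun_prop)
  unfold jfn
  simp only [hint]
  exact (by fun_prop : Measurable fun t => Real.exp (θ * t)).mul
    hmeas.integral_prod_right'.measurable

/-! ### Iterated Lebesgue integrals -/

lemma setLIntegral_regionBetween {α : Type*} [MeasurableSpace α] {μ : Measure α}
    {f g : α → ℝ} {s : Set α} (hf : Measurable f) (hg : Measurable g) (hs : MeasurableSet s)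
    {F : α × ℝ → ℝ≥0∞} (hF : Measurable F) :
    ∫⁻ p in regionBetween f g s, F p ∂μ.prod volume =
      ∫⁻ a in s, (∫⁻ b in Ioo (f a) (g a), F (a, b)) ∂μ := by
  have hR := measurableSet_regionBetween hf hg hs
  rw [← lintegral_indicator hR, lintegral_prod _ (hF.indicator hR).aemeasurable,
    ← lintegral_indicator hs]
  refine lintegral_congr fun a => ?_
  by_cases ha : a ∈ s
  · rw [indicator_of_mem ha, ← lintegral_indicator measurableSet_Ioo]
    refine lintegral_congr fun b => ?_
    simp only [indicator, regionBetween, mem_ofPred_eq, ha, true_and]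
  · have hnot (b : ℝ) : (a, b) ∉ regionBetween f g s := fun h => ha h.1
    simp only [indicator_of_notMem ha, indicator_of_notMem (hnot _), lintegral_zero]

lemma lintegral_pos_of_forall_pos {α : Type*} [MeasurableSpace α] {μ : Measure α} (hμ : μ ≠ 0)
    {f : α → ℝ≥0∞} (hf : Measurable f) (hpos : ∀ x, 0 < f x) : 0 < ∫⁻ x, f x ∂μ := by
  rw [lintegral_pos_iff_support hf, Function.support_eq_univ fun x => (hpos x).ne']
  exact Measure.measure_univ_pos.2 hμ

section Quartic

variable {α β γ : Type*} [MeasurableSpace α] [MeasurableSpace β] [MeasurableSpace γ]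
  {μ : Measure α} {μ' : Measure β} {ν : Measure γ} [SFinite μ] [SFinite μ'] [SFinite ν]

lemma lintegral_lintegral_mul_swap {a : α → γ → ℝ≥0∞} {w : γ → ℝ≥0∞}
    (ha : Measurable (Function.uncurry a)) (hw : Measurable w) :
    ∫⁻ x, ∫⁻ q, a x q * w q ∂ν ∂μ = ∫⁻ q, (∫⁻ x, a x q ∂μ) * w q ∂ν := by
  rw [lintegral_lintegral_swap (by fun_prop)]
  exact lintegral_congr fun q => lintegral_mul_const _ (by fun_prop)

lemma iterated_lintegral_eq_lintegral_sq_mul_sq {a : α → γ → ℝ≥0∞} {b : β → γ → ℝ≥0∞}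
    {w : γ → ℝ≥0∞} (ha : Measurable (Function.uncurry a)) (hb : Measurable (Function.uncurry b))
    (hw : Measurable w) :
    ∫⁻ x₁, ∫⁻ x₂, ∫⁻ x₁', ∫⁻ x₂', ∫⁻ q, a x₁ q * a x₂ q * w q * (b x₁' q * b x₂' q)
      ∂ν ∂μ' ∂μ' ∂μ ∂μ = ∫⁻ q, (∫⁻ x, a x q ∂μ) ^ 2 * w q * (∫⁻ x, b x q ∂μ') ^ 2 ∂ν := by
  have : Measurable fun q => ∫⁻ x, a x q ∂μ := ha.lintegral_prod_left'
  have : Measurable fun q => ∫⁻ x, b x q ∂μ' := hb.lintegral_prod_left'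
  calc _ = ∫⁻ x₁, ∫⁻ x₂, ∫⁻ x₁', ∫⁻ x₂', ∫⁻ q, b x₂' q * (b x₁' q * (a x₂ q * (a x₁ q * w q)))
        ∂ν ∂μ' ∂μ' ∂μ ∂μ := by
        congr! 10
        ring
    _ = ∫⁻ x₁, ∫⁻ x₂, ∫⁻ x₁', ∫⁻ q, b x₁' q * ((∫⁻ x, b x q ∂μ') * (a x₂ q * (a x₁ q * w q)))
        ∂ν ∂μ' ∂μ ∂μ := by
        congr! 6 with x₁ x₂ x₁'
        rw [lintegral_lintegral_mul_swap hb (by fun_prop)]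
        congr! 2
        ring
    _ = ∫⁻ x₁, ∫⁻ x₂, ∫⁻ q, a x₂ q * (a x₁ q * (w q * (∫⁻ x, b x q ∂μ') ^ 2)) ∂ν ∂μ ∂μ := by
        congr! 4 with x₁ x₂
        rw [lintegral_lintegral_mul_swap hb (by fun_prop)]
        congr! 2
        ring
    _ = ∫⁻ x₁, ∫⁻ q, a x₁ q * ((∫⁻ x, a x q ∂μ) * (w q * (∫⁻ x, b x q ∂μ') ^ 2)) ∂ν ∂μ := by
        congr! 2 with x₁
        rw [lintegral_lintegral_mul_swap ha (by fun_prop)]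
        congr! 2
        ring
    _ = ∫⁻ q, (∫⁻ x, a x q ∂μ) ^ 2 * w q * (∫⁻ x, b x q ∂μ') ^ 2 ∂ν := by
        rw [lintegral_lintegral_mul_swap ha (by fun_prop)]
        congr! 2
        ring

end Quartic

/-! ### The heat kernel and its action on measures -/

lemma heatK_pos {t : ℝ} (ht : 0 < t) (x : Plane) : 0 < heatK t x := by
  unfold heatK; positivity

lemma heatK_nonneg {t : ℝ} (ht : 0 ≤ t) (x : Plane) : 0 ≤ heatK t x := by
  unfold heatK; positivity

lemma heatK_sub_comm (t : ℝ) (x y : Plane) : heatK t (x - y) = heatK t (y - x) := by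
  rw [heatK, heatK, norm_sub_rev]

@[fun_prop]
lemma measurable_heatK {α : Type*} [MeasurableSpace α] {t : α → ℝ} {x : α → Plane}
    (ht : Measurable t) (hx : Measurable x) : Measurable fun a => heatK (t a) (x a) := by
  unfold heatK
  fun_prop

lemma integral_heatK {t : ℝ} (ht : 0 < t) : ∫ x, heatK t x = 1 := by
  have hexp (x : Plane) : -‖x‖ ^ 2 / (2 * t) = -(2 * t)⁻¹ * ‖x‖ ^ 2 := by ring
  simp only [heatK, hexp, integral_const_mul]
  rw [GaussianFourier.integral_rexp_neg_mul_sq_norm (by positivity)]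
  simp only [finrank_euclideanSpace_fin, Nat.cast_ofNat, div_self (two_ne_zero' ℝ), Real.rpow_one]
  field_simp

lemma lintegral_heatK {t : ℝ} (ht : 0 < t) : ∫⁻ x, ENNReal.ofReal (heatK t x) = 1 := by
  rw [← ofReal_integral_eq_lintegral_ofReal (integrable_of_integral_eq_one (integral_heatK ht))
    (ae_of_all _ (heatK_nonneg ht.le)), integral_heatK ht, ofReal_one]

lemma lintegral_heatK_sub_right {t : ℝ} (ht : 0 < t) (y : Plane) :
    ∫⁻ x, ENNReal.ofReal (heatK t (x - y)) = 1 := by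
  rw [lintegral_sub_right_eq_self (fun x => ENNReal.ofReal (heatK t x)), lintegral_heatK ht]

lemma lintegral_heatK_sub_left {t : ℝ} (ht : 0 < t) (y : Plane) :
    ∫⁻ x, ENNReal.ofReal (heatK t (y - x)) = 1 := by
  simp only [heatK_sub_comm t y, lintegral_heatK_sub_right ht]

/-- The density at `y` of the initial measure `μ` after it has evolved for time `t` under the heat
flow, i.e. `∫ p(t, x - y) μ(dx)`. -/
def heatFlow (μ : Measure Plane) (t : ℝ) (y : Plane) : ℝ≥0∞ :=
  ∫⁻ x, ENNReal.ofReal (heatK t (x - y)) ∂μ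

@[fun_prop]
lemma measurable_heatFlow {α : Type*} [MeasurableSpace α] (μ : Measure Plane) [SFinite μ]
    {t : α → ℝ} {y : α → Plane} (ht : Measurable t) (hy : Measurable y) :
    Measurable fun a => heatFlow μ (t a) (y a) := by
  unfold heatFlow
  exact Measurable.lintegral_prod_right (by fun_prop)

lemma heatFlow_pos {μ : Measure Plane} (hμ : μ ≠ 0) {t : ℝ} (ht : 0 < t) (y : Plane) :
    0 < heatFlow μ t y :=
  lintegral_pos_of_forall_pos hμ (by fun_prop) fun x => ENNReal.ofReal_pos.2 (heatK_pos ht (x - y))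

lemma heatFlow_le {μ : Measure Plane} {M : ℝ≥0∞} (hμ : μ ≤ M • volume) {t : ℝ} (ht : 0 < t)
    (y : Plane) : heatFlow μ t y ≤ M :=
  calc heatFlow μ t y ≤ ∫⁻ x, ENNReal.ofReal (heatK t (x - y)) ∂(M • volume) :=
        lintegral_mono' hμ le_rfl
    _ = M := by rw [lintegral_smul_measure, lintegral_heatK_sub_right ht, smul_eq_mul, mul_one]

lemma lintegral_heatFlow (μ : Measure Plane) [SFinite μ] {t : ℝ} (ht : 0 < t) :
    ∫⁻ y, heatFlow μ t y = μ univ := by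
  simp only [heatFlow]
  rw [lintegral_lintegral_swap (by fun_prop)]
  simp only [lintegral_heatK_sub_left ht, lintegral_one]

/-! ### The kernel `Wker` as a quartic form in the initial measures -/

/-- The pairs `(u, u')` of positive times with `u + u' < t`, the domain of the two time integrals
in `Wker θ t`. -/
def timeSimplex (t : ℝ) : Set (ℝ × ℝ) :=
  regionBetween 0 (fun u => t - u) (Ioo 0 t)

lemma mem_timeSimplex {t : ℝ} {p : ℝ × ℝ} :
    p ∈ timeSimplex t ↔ 0 < p.1 ∧ 0 < p.2 ∧ 0 < t - p.1 - p.2 := by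
  simp only [timeSimplex, regionBetween, mem_ofPred_eq, mem_Ioo, Pi.zero_apply]
  constructor
  · rintro ⟨⟨h₁, -⟩, h₂, h₃⟩
    exact ⟨h₁, h₂, by linarith⟩
  · rintro ⟨h₁, h₂, h₃⟩
    exact ⟨⟨h₁, by linarith⟩, h₂, by linarith⟩

lemma timeSimplex_subset (t : ℝ) : timeSimplex t ⊆ Ioo 0 t ×ˢ Ioo 0 t := by
  intro p hp
  obtain ⟨h₁, h₂, h₃⟩ := mem_timeSimplex.1 hp
  exact ⟨⟨h₁, by linarith⟩, h₂, by linarith⟩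

lemma measurableSet_timeSimplex (t : ℝ) : MeasurableSet (timeSimplex t) :=
  measurableSet_regionBetween measurable_const (by fun_prop) measurableSet_Ioo

lemma volume_timeSimplex_ne_top (t : ℝ) : volume (timeSimplex t) ≠ ∞ := by
  refine measure_ne_top_of_subset (timeSimplex_subset t) ?_
  rw [Measure.volume_eq_prod, Measure.prod_prod, Real.volume_Ioo]
  finiteness

lemma volume_timeSimplex_ne_zero {t : ℝ} (ht : 0 < t) : volume (timeSimplex t) ≠ 0 := by
  have hopen : IsOpen (timeSimplex t) := by
    have hset : timeSimplex t = {p | 0 < p.1} ∩ ({p | 0 < p.2} ∩ {p | 0 < t - p.1 - p.2}) :=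
      ext fun _ => mem_timeSimplex
    rw [hset]
    exact (isOpen_Ioi.preimage continuous_fst).inter ((isOpen_Ioi.preimage continuous_snd).inter
      (isOpen_Ioi.preimage (by fun_prop : Continuous fun p : ℝ × ℝ => t - p.1 - p.2)))
  have hmem : (t / 3, t / 3) ∈ timeSimplex t :=
    mem_timeSimplex.2 ⟨by positivity, by positivity, by linarith⟩
  exact (hopen.measure_pos volume ⟨_, hmem⟩).ne'

/-- The domain of integration of `Wker θ t` as a measure: a point `((u, u'), (y, y'))` consists of
two times in `timeSimplex t` and two positions. -/
def configMeasure (t : ℝ) : Measure ((ℝ × ℝ) × (Plane × Plane)) :=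
  (volume.restrict (timeSimplex t)).prod volume

instance (t : ℝ) : SFinite (configMeasure t) := by
  unfold configMeasure
  infer_instance

lemma lintegral_configMeasure (t : ℝ) {F : (ℝ × ℝ) × (Plane × Plane) → ℝ≥0∞} (hF : Measurable F) :
    ∫⁻ q, F q ∂configMeasure t = ∫⁻ p in timeSimplex t, ∫⁻ y, ∫⁻ y', F (p, (y, y')) := by
  rw [configMeasure, lintegral_prod _ hF.aemeasurable]
  refine lintegral_congr fun p => ?_
  rw [Measure.volume_eq_prod, lintegral_prod _ (by fun_prop)]

/-- The middle factor `4π j^θ(r) p(r/2, y - y')` of the integrand of `Wker`. -/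
def pairKernel (θ r : ℝ) (y y' : Plane) : ℝ≥0∞ :=
  ENNReal.ofReal (4 * Real.pi * jfn θ r * heatK (r / 2) (y - y'))

@[fun_prop]
lemma measurable_pairKernel {α : Type*} [MeasurableSpace α] (θ : ℝ) {r : α → ℝ} {y y' : α → Plane}
    (hr : Measurable r) (hy : Measurable y) (hy' : Measurable y') :
    Measurable fun a => pairKernel θ (r a) (y a) (y' a) := by
  unfold pairKernel
  fun_prop

lemma pairKernel_pos (θ : ℝ) {r : ℝ} (hr : 0 < r) (y y' : Plane) : 0 < pairKernel θ r y y' := by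
  have hj : 0 < jfn θ r := jfn_pos θ (by linarith)
  have hp := heatK_pos (half_pos hr) (y - y')
  exact ENNReal.ofReal_pos.2 (by positivity)

lemma pairKernel_add_le (θ s : ℝ) {r t : ℝ} (hr : 0 ≤ r) (hrt : r ≤ t) (y y' : Plane) :
    pairKernel (θ + s) r y y' ≤ ENNReal.ofReal (Real.exp (t * |s|)) * pairKernel θ r y y' := by
  have hsr : s * r ≤ t * |s| := by
    calc s * r ≤ |s| * t := mul_le_mul (le_abs_self s) hrt hr (abs_nonneg s)
      _ = t * |s| := mul_comm _ _
  have hj := jfn_nonneg θ r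
  have hp := heatK_nonneg (by positivity : 0 ≤ r / 2) (y - y')
  rw [pairKernel, pairKernel, ← ENNReal.ofReal_mul (Real.exp_pos _).le, jfn_add]
  apply ENNReal.ofReal_le_ofReal
  calc _ = Real.exp (s * r) * (4 * Real.pi * jfn θ r * heatK (r / 2) (y - y')) := by ring
    _ ≤ _ := by gcongr

lemma exists_lintegral_pairKernel_le (θ t : ℝ) :
    ∃ K ≠ ∞, ∀ r ∈ Ioo 0 t, ∀ y, ∫⁻ y', pairKernel θ r y y' ≤ K := by
  obtain ⟨C, hC⟩ := exists_jfn_le θ t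
  refine ⟨ENNReal.ofReal (4 * Real.pi * C), ENNReal.ofReal_ne_top, fun r hr y => ?_⟩
  have hj := jfn_nonneg θ r
  simp only [pairKernel, ENNReal.ofReal_mul (show 0 ≤ 4 * Real.pi * jfn θ r by positivity)]
  rw [lintegral_const_mul _ (by fun_prop), lintegral_heatK_sub_left (half_pos hr.1), mul_one]
  gcongr
  exact hC r (Ioo_subset_Icc_self hr)

lemma Wker_eq_lintegral_configMeasure (θ t : ℝ) (x₁ x₂ x₁' x₂' : Plane) :
    Wker θ t x₁ x₂ x₁' x₂' = ∫⁻ q, ENNReal.ofReal (heatK q.1.1 (x₁ - q.2.1)) *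
      ENNReal.ofReal (heatK q.1.1 (x₂ - q.2.1)) * pairKernel θ q.1.2 q.2.1 q.2.2 *
      (ENNReal.ofReal (heatK (t - q.1.1 - q.1.2) (x₁' - q.2.2)) *
        ENNReal.ofReal (heatK (t - q.1.1 - q.1.2) (x₂' - q.2.2))) ∂configMeasure t := by
  rw [lintegral_configMeasure t (by fun_prop), timeSimplex, Measure.volume_eq_prod,
    setLIntegral_regionBetween measurable_zero (by fun_prop) measurableSet_Ioo]
  · refine setLIntegral_congr_fun measurableSet_Ioo fun u hu => ?_
    refine setLIntegral_congr_fun measurableSet_Ioo fun u' hu' => ?_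
    refine lintegral_congr fun y => lintegral_congr fun y' => ?_
    have hu'' : 0 ≤ t - u - u' := by linarith [hu'.2]
    have hj := jfn_nonneg θ u'
    have hp₁ := heatK_nonneg hu.1.le (x₁ - y)
    have hp₂ := heatK_nonneg hu.1.le (x₂ - y)
    have hp := heatK_nonneg (half_pos hu'.1).le (y - y')
    have hp₁' := heatK_nonneg hu'' (x₁' - y')
    simp only [pairKernel, heatK_sub_comm _ y']
    rw [ENNReal.ofReal_mul (by positivity), ENNReal.ofReal_mul (by positivity),
      ENNReal.ofReal_mul hp₁, ENNReal.ofReal_mul hp₁']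
  · fun_prop

/-- The pairing `∫ W^θ(t, (x₁, x₂), (x₁', x₂')) μ(dx₁) μ(dx₂) μ'(dx₁') μ'(dx₂')`; it extends `Npair`
from densities to measures. -/
def wkerPairing (θ t : ℝ) (μ μ' : Measure Plane) : ℝ≥0∞ :=
  ∫⁻ x₁, ∫⁻ x₂, ∫⁻ x₁', ∫⁻ x₂', Wker θ t x₁ x₂ x₁' x₂' ∂μ' ∂μ' ∂μ ∂μ

lemma wkerPairing_add_le (θ s t : ℝ) (μ μ' : Measure Plane) :
    wkerPairing (θ + s) t μ μ' ≤
      ENNReal.ofReal (Real.exp (t * |s|)) * wkerPairing θ t μ μ' := by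
  have hW (x₁ x₂ x₁' x₂' : Plane) : Wker (θ + s) t x₁ x₂ x₁' x₂' ≤
      ENNReal.ofReal (Real.exp (t * |s|)) * Wker θ t x₁ x₂ x₁' x₂' := by
    simp only [Wker_eq_lintegral_configMeasure]
    rw [← lintegral_const_mul _ (by fun_prop), lintegral_configMeasure t (by fun_prop),
      lintegral_configMeasure t (by fun_prop)]
    refine setLIntegral_mono' (measurableSet_timeSimplex t) fun p hp => ?_
    refine lintegral_mono fun y => lintegral_mono fun y' => ?_
    have hr := (timeSimplex_subset t hp).2
    grw [pairKernel_add_le θ s hr.1.le hr.2.le]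
    exact le_of_eq (by ring)
  simp only [wkerPairing, ← lintegral_const_mul' _ _ ENNReal.ofReal_ne_top]
  gcongr
  exact hW _ _ _ _

lemma wkerPairing_eq_lintegral_heatFlow (θ t : ℝ) (μ μ' : Measure Plane) [SFinite μ] [SFinite μ'] :
    wkerPairing θ t μ μ' = ∫⁻ p in timeSimplex t, ∫⁻ y, ∫⁻ y', heatFlow μ p.1 y ^ 2 *
      pairKernel θ p.2 y y' * heatFlow μ' (t - p.1 - p.2) y' ^ 2 := by
  rw [← lintegral_configMeasure t (F := fun q => heatFlow μ q.1.1 q.2.1 ^ 2 *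
    pairKernel θ q.1.2 q.2.1 q.2.2 * heatFlow μ' (t - q.1.1 - q.1.2) q.2.2 ^ 2) (by fun_prop)]
  simp only [wkerPairing, Wker_eq_lintegral_configMeasure]
  exact iterated_lintegral_eq_lintegral_sq_mul_sq
    (a := fun x (q : (ℝ × ℝ) × (Plane × Plane)) => ENNReal.ofReal (heatK q.1.1 (x - q.2.1)))
    (b := fun x (q : (ℝ × ℝ) × (Plane × Plane)) =>
      ENNReal.ofReal (heatK (t - q.1.1 - q.1.2) (x - q.2.2)))
    (by fun_prop) (by fun_prop) (by fun_prop)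

lemma wkerPairing_ne_zero (θ : ℝ) {t : ℝ} (ht : 0 < t) {μ μ' : Measure Plane} [SFinite μ]
    [SFinite μ'] (hμ : μ ≠ 0) (hμ' : μ' ≠ 0) : wkerPairing θ t μ μ' ≠ 0 := by
  have hpos (p) (hp : p ∈ timeSimplex t) : ∫⁻ y, ∫⁻ y', heatFlow μ p.1 y ^ 2 *
      pairKernel θ p.2 y y' * heatFlow μ' (t - p.1 - p.2) y' ^ 2 ≠ 0 := by
    obtain ⟨hu, hr, hv⟩ := mem_timeSimplex.1 hp
    refine (lintegral_pos_of_forall_pos (NeZero.ne volume)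
      (Measurable.lintegral_prod_right (by fun_prop)) fun y =>
        lintegral_pos_of_forall_pos (NeZero.ne volume) (by fun_prop) fun y' => ?_).ne'
    have hy := heatFlow_pos hμ hu y
    have hyy' := pairKernel_pos θ hr y y'
    have hy' := heatFlow_pos hμ' hv y'
    positivity
  rw [wkerPairing_eq_lintegral_heatFlow, ← pos_iff_ne_zero, setLIntegral_pos_iff
    (Measurable.lintegral_prod_right (Measurable.lintegral_prod_right (by fun_prop)))]
  exact (pos_iff_ne_zero.2 (volume_timeSimplex_ne_zero ht)).trans_le
    (measure_mono (subset_inter hpos Subset.rfl))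

lemma wkerPairing_ne_top (θ t : ℝ) {μ μ' : Measure Plane} [IsFiniteMeasure μ] [SFinite μ']
    {M M' : ℝ≥0∞} (hM : M ≠ ∞) (hM' : M' ≠ ∞) (hμ : μ ≤ M • volume) (hμ' : μ' ≤ M' • volume) :
    wkerPairing θ t μ μ' ≠ ∞ := by
  obtain ⟨K, hK, hKle⟩ := exists_lintegral_pairKernel_le θ t
  have hpos (p) (hp : p ∈ timeSimplex t) : ∫⁻ y, ∫⁻ y', heatFlow μ p.1 y ^ 2 *
      pairKernel θ p.2 y y' * heatFlow μ' (t - p.1 - p.2) y' ^ 2 ≤ M * μ univ * K * M' ^ 2 := by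
    obtain ⟨hu, -, hv⟩ := mem_timeSimplex.1 hp
    calc _ ≤ ∫⁻ y, ∫⁻ y', M * heatFlow μ p.1 y * M' ^ 2 * pairKernel θ p.2 y y' := by
          refine lintegral_mono fun y => lintegral_mono fun y' => ?_
          have hsq : heatFlow μ p.1 y ^ 2 ≤ M * heatFlow μ p.1 y := by
            rw [sq]
            gcongr
            exact heatFlow_le hμ hu y
          grw [hsq, heatFlow_le hμ' hv y']
          exact le_of_eq (by ring)
      _ ≤ ∫⁻ y, M * K * M' ^ 2 * heatFlow μ p.1 y := by
          gcongr with y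
          rw [lintegral_const_mul _ (by fun_prop)]
          grw [hKle p.2 (timeSimplex_subset t hp).2 y]
          exact le_of_eq (by ring)
      _ = M * μ univ * K * M' ^ 2 := by
          rw [lintegral_const_mul _ (by fun_prop), lintegral_heatFlow μ hu]
          ring
  rw [wkerPairing_eq_lintegral_heatFlow]
  refine ne_top_of_le_ne_top ?_ (setLIntegral_mono' (measurableSet_timeSimplex t) hpos)
  rw [setLIntegral_const]
  exact ENNReal.mul_ne_top (by finiteness) (volume_timeSimplex_ne_top t)

/-! ### Densities as initial measures -/

section WithDensity

variable {α : Type*} [MeasurableSpace α] {μ : Measure α} {g : α → ℝ}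

lemma withDensity_ofReal_le_eLpNorm_top_smul :
    μ.withDensity (fun x => ENNReal.ofReal (g x)) ≤ eLpNorm g ∞ μ • μ := by
  rw [← withDensity_const, eLpNorm_exponent_top]
  refine withDensity_mono ?_
  filter_upwards [ae_le_eLpNormEssSup (f := g) (μ := μ)] with x hx
  exact Real.ofReal_le_enorm (g x) |>.trans hx

lemma withDensity_ofReal_ne_zero (hg : AEMeasurable g μ) (hg0 : 0 ≤ᵐ[μ] g) (hne : ¬ g =ᵐ[μ] 0) :
    μ.withDensity (fun x => ENNReal.ofReal (g x)) ≠ 0 := by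
  rw [Ne, withDensity_eq_zero_iff hg.ennreal_ofReal]
  refine fun h => hne ?_
  filter_upwards [h, hg0] with x hx hx0
  exact le_antisymm (ENNReal.ofReal_eq_zero.1 hx) hx0

lemma lintegral_withDensity_ofReal (hg : AEMeasurable g μ) (F : α → ℝ≥0∞) :
    ∫⁻ x, F x ∂μ.withDensity (fun x => ENNReal.ofReal (g x)) =
      ∫⁻ x, ENNReal.ofReal (g x) * F x ∂μ :=
  lintegral_withDensity_eq_lintegral_mul_non_measurable₀ μ hg.ennreal_ofReal
    (ae_of_all _ fun _ => ENNReal.ofReal_lt_top) F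

end WithDensity

lemma Npair_eq_wkerPairing {g g' : Plane → ℝ} (hg : AEMeasurable g) (hg' : AEMeasurable g')
    (hg0 : 0 ≤ᵐ[volume] g) (hg'0 : 0 ≤ᵐ[volume] g') (θ : ℝ) :
    Npair g g' θ = wkerPairing θ 1 (volume.withDensity fun x => ENNReal.ofReal (g x))
      (volume.withDensity fun x => ENNReal.ofReal (g' x)) := by
  simp only [Npair, wkerPairing, lintegral_withDensity_ofReal hg, lintegral_withDensity_ofReal hg',
    ← lintegral_const_mul' _ _ ENNReal.ofReal_ne_top]
  refine lintegral_congr_ae (hg0.mono fun x₁ hx₁ => lintegral_congr fun x₂ => ?_)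
  refine lintegral_congr_ae (hg'0.mono fun x₁' hx₁' => lintegral_congr fun x₂' => ?_)
  rw [ENNReal.ofReal_mul hx₁, ENNReal.ofReal_mul hx₁']
  ring

lemma tendsto_toReal_div_of_add_le {N : ℝ → ℝ≥0∞} {t θ : ℝ}
    (hN : ∀ θ s, N (θ + s) ≤ ENNReal.ofReal (Real.exp (t * |s|)) * N θ)
    (h0 : N θ ≠ 0) (htop : N θ ≠ ∞) :
    Filter.Tendsto (fun τ => (N (θ - τ)).toReal / (N θ).toReal) (nhds 0) (nhds 1) := by
  have hpos : 0 < (N θ).toReal := ENNReal.toReal_pos h0 htop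
  have hupper (τ : ℝ) : N (θ - τ) ≤ ENNReal.ofReal (Real.exp (t * |τ|)) * N θ := by
    simpa only [sub_eq_add_neg, abs_neg] using hN θ (-τ)
  have hlower (τ : ℝ) : N θ ≤ ENNReal.ofReal (Real.exp (t * |τ|)) * N (θ - τ) := by
    simpa only [sub_add_cancel] using hN (θ - τ) τ
  have hfin (τ : ℝ) : N (θ - τ) ≠ ∞ :=
    ne_top_of_le_ne_top (ENNReal.mul_ne_top ENNReal.ofReal_ne_top htop) (hupper τ)
  have hle {a b : ℝ≥0∞} (hb : b ≠ ∞) (τ : ℝ) (h : a ≤ ENNReal.ofReal (Real.exp (t * |τ|)) * b) :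
      a.toReal ≤ Real.exp (t * |τ|) * b.toReal := by
    simpa only [ENNReal.toReal_mul, ENNReal.toReal_ofReal (Real.exp_pos _).le] using
      ENNReal.toReal_mono (ENNReal.mul_ne_top ENNReal.ofReal_ne_top hb) h
  have hlim (c : ℝ) : Filter.Tendsto (fun τ => Real.exp (c * |τ|)) (nhds 0) (nhds 1) := by
    have hcont : Continuous fun τ : ℝ => Real.exp (c * |τ|) := by fun_prop
    simpa using hcont.tendsto 0
  refine tendsto_of_tendsto_of_tendsto_of_le_of_le (hlim (-t)) (hlim t) (fun τ => ?_) fun τ => ?_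
  · rw [le_div_iff₀ hpos, neg_mul, Real.exp_neg, inv_mul_le_iff₀ (Real.exp_pos _)]
    exact hle (hfin τ) τ (hlower τ)
  · rw [div_le_iff₀ hpos]
    exact hle htop τ (hupper τ)

theorem Npair_ratio_tendsto_one_general {g g' : Plane → ℝ} (hg : Integrable g)
    (hgb : MemLp g ∞) (hg'b : MemLp g' ∞) (hg0 : 0 ≤ᵐ[volume] g) (hg'0 : 0 ≤ᵐ[volume] g')
    (hgne : ¬ g =ᵐ[volume] 0) (hg'ne : ¬ g' =ᵐ[volume] 0) (θ : ℝ) :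
    Filter.Tendsto (fun τ : ℝ => (Npair g g' (θ - τ)).toReal / (Npair g g' θ).toReal)
      (nhds 0) (nhds 1) := by
  have hgm := hgb.1.aemeasurable
  have hg'm := hg'b.1.aemeasurable
  let μ := volume.withDensity fun x => ENNReal.ofReal (g x)
  let μ' := volume.withDensity fun x => ENNReal.ofReal (g' x)
  have : IsFiniteMeasure μ := isFiniteMeasure_withDensity_ofReal hg.2
  have hN (θ : ℝ) : Npair g g' θ = wkerPairing θ 1 μ μ' :=
    Npair_eq_wkerPairing hgm hg'm hg0 hg'0 θ
  refine tendsto_toReal_div_of_add_le (N := Npair g g') (t := 1) (fun θ s => ?_) ?_ ?_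
  · simpa only [hN] using wkerPairing_add_le θ s 1 μ μ'
  · rw [hN]
    exact wkerPairing_ne_zero θ one_pos (withDensity_ofReal_ne_zero hgm hg0 hgne)
      (withDensity_ofReal_ne_zero hg'm hg'0 hg'ne)
  · rw [hN]
    exact wkerPairing_ne_top θ 1 hgb.2.ne hg'b.2.ne withDensity_ofReal_le_eLpNorm_top_smul
      withDensity_ofReal_le_eLpNorm_top_smul

/-- For continuous, compactly supported, nonnegative, not-identically-zero `g, g'` and fixed
`θ ∈ ℝ`, the ratio `N_{g,g'}(θ − τ̄)/N_{g,g'}(θ)` tends to `1` as `τ̄ → 0⁺`. -/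
theorem Npair_ratio_tendsto_one (g g' : Plane → ℝ)
    (hgc : Continuous g) (hg'c : Continuous g')
    (hgs : HasCompactSupport g) (hg's : HasCompactSupport g')
    (hg0 : ∀ x, 0 ≤ g x) (hg'0 : ∀ x, 0 ≤ g' x)
    (hgne : g ≠ 0) (hg'ne : g' ≠ 0) (θ : ℝ) :
    Filter.Tendsto (fun τ : ℝ => (Npair g g' (θ - τ)).toReal / (Npair g g' θ).toReal)
      (nhdsWithin 0 (Ioi 0)) (nhds 1) :=
  (Npair_ratio_tendsto_one_general (hgc.integrable_of_hasCompactSupport hgs)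
    (hgc.memLp_top_of_hasCompactSupport hgs _) (hg'c.memLp_top_of_hasCompactSupport hg's _)
    (ae_of_all _ hg0) (ae_of_all _ hg'0) (mt (hgc.ae_eq_iff_eq _ continuous_zero).1 hgne)
    (mt (hg'c.ae_eq_iff_eq _ continuous_zero).1 hg'ne) θ).mono_left nhdsWithin_le_nhds

end
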